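/- arXiv:1801.09871 — 9 statements merged into one kernel-verified Lean document; each statement's English description precedes it below -/
import Mathlib

section
/- The packing chromatic number of the graph H is at least 7; that is, H admits no k-packing coloring for any k ≤ 6. -/
/-- `W` is an `i`-packing in `G`: any two distinct vertices of `W` are at
graph distance greater than `i` in `G`. -/
def IsPacking {V : Type*} (G : SimpleGraph V) (i : ℕ) (W : Set V) : Prop :=
  ∀ u ∈ W, ∀ v ∈ W, u ≠ v → i < G.dist u v

/-- `c` is a `k`-packing coloring of `G`: every color lies in `{1, …, k}` and
for each `i ∈ {1, …, k}` the color class `c⁻¹(i)` is an `i`-packing. -/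
def IsPackingColoring {V : Type*} (G : SimpleGraph V) (k : ℕ) (c : V → ℕ) : Prop :=
  (∀ v, 1 ≤ c v ∧ c v ≤ k) ∧ ∀ i, 1 ≤ i → i ≤ k → IsPacking G i {v | c v = i}

/-- The packing chromatic number: the least `k` admitting a `k`-packing coloring. -/
noncomputable def packingChromaticNumber {V : Type*} (G : SimpleGraph V) : ℕ :=
  sInf {k | ∃ c : V → ℕ, IsPackingColoring G k c}


/-- Edges of `H`; vertices `y1,…,y7` are `0,…,6`, `z1,…,z7` are `7,…,13`,
and `w` is `14`. -/
def Hedges : List (Fin 15 × Fin 15) :=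
  [(0,1),(1,2),(2,6),(6,5),(5,4),(4,0),(1,3),(3,5),
   (7,8),(8,9),(9,13),(13,12),(12,11),(11,7),(8,10),(10,12),
   (3,14),(14,10),(2,7),(4,13)]

/-- The graph `H`. -/
def Hgraph : SimpleGraph (Fin 15) :=
  SimpleGraph.fromRel (fun u v => (u, v) ∈ Hedges)


abbrev Item := Fin 15 × ℕ × ℕ × ℕ

def searchH : List Item → ℕ → ℕ → ℕ → ℕ → Bool
  | [], _, _, _, _ => true
  | x :: L, f1, f2, f3, b =>
    (bif f1.testBit x.1.val then false else searchH L (f1 ||| x.2.1) f2 f3 b) ||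
    ((bif f2.testBit x.1.val then false else searchH L f1 (f2 ||| x.2.2.1) f3 b) ||
    ((bif f3.testBit x.1.val then false else searchH L f1 f2 (f3 ||| x.2.2.2) b) ||
    (match b with
      | 0 => false
      | b + 1 => searchH L f1 f2 f3 b)))

def itemsH : List Item := [(1, 13, 16637, 28157), (2, 194, 2539, 24571), (3, 16418, 17527, 30199), (6, 36, 190, 27071), (5, 88, 24671, 30431), (4, 8225, 12907, 32623), (0, 18, 8254, 29438), (14, 1032, 5418, 16383), (7, 2308, 8006, 32623), (8, 1664, 32388, 32478), (10, 20736, 31624, 31678), (12, 11264, 28560, 28605), (13, 4624, 7985, 24571), (9, 8448, 13712, 32181), (11, 4224, 13700, 30678)]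

def reachH : ℕ → Fin 15 → Fin 15 → Bool
  | 0, u, v => decide (u = v)
  | n + 1, u, v => decide (u = v) || Hedges.any (fun e =>
      (decide (e.1 = u) && reachH n e.2 v) || (decide (e.2 = u) && reachH n e.1 v))

theorem Hedges_ne : ∀ e ∈ Hedges, e.1 ≠ e.2 := by decide +kernel

theorem reachH_walk (n : ℕ) : ∀ u v, reachH n u v = true →
    ∃ p : Hgraph.Walk u v, p.length ≤ n := by
  induction n with
  | zero =>
    intro u v h
    simp only [reachH, decide_eq_true_eq] at h
    subst h
    exact ⟨.nil, by simp⟩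
  | succ n ih =>
    intro u v h
    simp only [reachH, Bool.or_eq_true, decide_eq_true_eq, List.any_eq_true,
      Bool.and_eq_true] at h
    rcases h with h | ⟨e, he, ⟨h1, h2⟩ | ⟨h1, h2⟩⟩
    · subst h
      exact ⟨.nil, by simp⟩
    · subst h1
      obtain ⟨p, hp⟩ := ih _ _ h2
      have ha : Hgraph.Adj e.1 e.2 := by
        rw [Hgraph, SimpleGraph.fromRel_adj]
        exact ⟨Hedges_ne e he, Or.inl he⟩
      exact ⟨.cons ha p, by simpa using hp⟩
    · subst h1
      obtain ⟨p, hp⟩ := ih _ _ h2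
      have ha : Hgraph.Adj e.2 e.1 := by
        rw [Hgraph, SimpleGraph.fromRel_adj]
        exact ⟨(Hedges_ne e he).symm, Or.inr he⟩
      exact ⟨.cons ha p, by simpa using hp⟩

theorem reachH_dist {n : ℕ} {u v : Fin 15} (h : reachH n u v = true) :
    Hgraph.dist u v ≤ n := by
  obtain ⟨p, hp⟩ := reachH_walk n u v h
  exact (SimpleGraph.dist_le p).trans hp

theorem items_ok : ∀ x ∈ itemsH, ∀ u : Fin 15,
    (x.2.1.testBit u.val = true → x.1 ≠ u ∧ reachH 1 x.1 u = true) ∧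
    (x.2.2.1.testBit u.val = true → x.1 ≠ u ∧ reachH 2 x.1 u = true) ∧
    (x.2.2.2.testBit u.val = true → x.1 ≠ u ∧ reachH 3 x.1 u = true) := by
  decide +kernel

theorem reach4 : ∀ u v : Fin 15, reachH 4 u v = true := by decide +kernel

theorem search_false : searchH itemsH 0 0 0 3 = false := by decide +kernel

theorem items_nodup : (itemsH.map Prod.fst).Nodup := by decide +kernel

theorem search_sound (c : Fin 15 → ℕ) (hc : ∀ v, 1 ≤ c v) (L : List Item) :
    ∀ f1 f2 f3 b : ℕ,
    (∀ x ∈ L, ∀ u : Fin 15,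
      (x.2.1.testBit u.val = true → c x.1 = 1 → c u ≠ 1) ∧
      (x.2.2.1.testBit u.val = true → c x.1 = 2 → c u ≠ 2) ∧
      (x.2.2.2.testBit u.val = true → c x.1 = 3 → c u ≠ 3)) →
    (∀ u : Fin 15, f1.testBit u.val = true → c u ≠ 1) →
    (∀ u : Fin 15, f2.testBit u.val = true → c u ≠ 2) →
    (∀ u : Fin 15, f3.testBit u.val = true → c u ≠ 3) →
    (L.map Prod.fst).countP (fun v => decide (4 ≤ c v)) ≤ b →
    searchH L f1 f2 f3 b = true := by
  induction L with
  | nil => intros; rfl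
  | cons x L ih =>
    intro f1 f2 f3 b hL h1 h2 h3 hb
    have hx := hL x (by simp)
    have hL' := fun y hy => hL y (List.mem_cons_of_mem x hy)
    rw [List.map_cons, List.countP_cons] at hb
    have hcx := hc x.1
    rw [searchH.eq_def]
    simp only [Bool.or_eq_true]
    by_cases e1 : c x.1 = 1
    · left
      have : f1.testBit x.1.val = false := by
        by_contra h
        exact h1 x.1 (by simpa using h) e1
      rw [this]
      refine ih _ _ _ _ hL' (fun u hu => ?_) h2 h3 (by omega)
      rw [Nat.testBit_or, Bool.or_eq_true] at hu
      exact hu.elim (h1 u) (fun h => (hx u).1 h e1)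
    right
    by_cases e2 : c x.1 = 2
    · left
      have : f2.testBit x.1.val = false := by
        by_contra h
        exact h2 x.1 (by simpa using h) e2
      rw [this]
      refine ih _ _ _ _ hL' h1 (fun u hu => ?_) h3 (by omega)
      rw [Nat.testBit_or, Bool.or_eq_true] at hu
      exact hu.elim (h2 u) (fun h => (hx u).2.1 h e2)
    right
    by_cases e3 : c x.1 = 3
    · left
      have : f3.testBit x.1.val = false := by
        by_contra h
        exact h3 x.1 (by simpa using h) e3
      rw [this]
      refine ih _ _ _ _ hL' h1 h2 (fun u hu => ?_) (by omega)
      rw [Nat.testBit_or, Bool.or_eq_true] at hu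
      exact hu.elim (h3 u) (fun h => (hx u).2.2 h e3)
    right
    have h4 : 4 ≤ c x.1 := by omega
    simp only [h4, decide_true, if_true] at hb
    cases b with
    | zero => omega
    | succ b => exact ih _ _ _ _ hL' h1 h2 h3 (by omega)

theorem no_coloring (k : ℕ) (hk : k ≤ 6) (c : Fin 15 → ℕ)
    (h : IsPackingColoring Hgraph k c) : False := by
  obtain ⟨hc, hp⟩ := h
  have key : ∀ i u v, c u = i → u ≠ v → Hgraph.dist u v ≤ i → c v ≠ i := by
    intro i u v hu huv hd hv
    have h1 := hc u
    have := hp i (by omega) (by omega) u hu v hv huv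
    omega
  have hs := search_sound c (fun v => (hc v).1) itemsH 0 0 0 3 ?_ (by simp) (by simp) (by simp) ?_
  · rw [search_false] at hs
    exact Bool.noConfusion hs
  · intro x hx u
    obtain ⟨a1, a2, a3⟩ := items_ok x hx u
    exact ⟨fun t e => key 1 _ _ e (a1 t).1 (reachH_dist (a1 t).2),
      fun t e => key 2 _ _ e (a2 t).1 (reachH_dist (a2 t).2),
      fun t e => key 3 _ _ e (a3 t).1 (reachH_dist (a3 t).2)⟩
  · rw [List.countP_eq_length_filter,
      ← List.toFinset_card_of_nodup (items_nodup.filter _)]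
    have : (Finset.Icc 4 6).card = 3 := rfl
    rw [← this]
    refine Finset.card_le_card_of_injOn c ?_ ?_
    · intro v hv
      have h1 := hc v
      have h2 : 4 ≤ c v := by
        have := List.mem_filter.1 (List.mem_toFinset.1 (Finset.mem_coe.1 hv))
        simpa using this.2
      exact Finset.mem_coe.2 (Finset.mem_Icc.2 ⟨h2, by omega⟩)
    · intro u hu v hv huv
      have h2 : 4 ≤ c u := by
        have := List.mem_filter.1 (List.mem_toFinset.1 (Finset.mem_coe.1 hu))
        simpa using this.2
      by_contra hne
      exact key (c u) u v rfl hne ((reachH_dist (reach4 u v)).trans h2) huv.symm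


/-- The packing chromatic number of `H` is at least `7`; that is, `H` admits
no `k`-packing coloring for any `k ≤ 6`. -/
theorem stmt0 :
    7 ≤ packingChromaticNumber Hgraph ∧
    ∀ k ≤ 6, ¬ ∃ c : Fin 15 → ℕ, IsPackingColoring Hgraph k c := by
  have hno : ∀ k ≤ 6, ¬ ∃ c : Fin 15 → ℕ, IsPackingColoring Hgraph k c :=
    fun k hk ⟨c, h⟩ => no_coloring k hk c h
  refine ⟨?_, hno⟩
  rw [packingChromaticNumber]
  refine le_csInf ⟨15, fun v => v.val + 1, fun v => ⟨by simp, by have := v.isLt; simp only; omega⟩, ?_⟩ ?_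
  · intro i _ _ u hu v hv huv
    simp only [Set.mem_ofPred_eq] at hu hv
    exact absurd (Fin.ext (by omega)) huv
  · intro k hk
    by_contra hlt
    exact hno k (by omega) hk
end

section
/- The graph H is connected and has diameter exactly 4 (the maximum over all pairs of vertices of the graph distance equals 4). -/
/-- Neighbours of a vertex of `H`. -/
def Hnbrs (u : Fin 15) : List (Fin 15) :=
  (List.finRange 15).filter (fun v => u ≠ v ∧ ((u, v) ∈ Hedges ∨ (v, u) ∈ Hedges))

/-- Boolean test for the existence of a walk of length at most `n`. -/
def Hreach : ℕ → Fin 15 → Fin 15 → Bool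
  | 0, u, v => decide (u = v)
  | n + 1, u, v => decide (u = v) || (Hnbrs u).any (fun x => Hreach n x v)

theorem Hreach_walk (n : ℕ) : ∀ u v, Hreach n u v = true →
    ∃ p : Hgraph.Walk u v, p.length ≤ n := by
  induction n with
  | zero =>
    intro u v h
    have h' : u = v := by simpa [Hreach] using h
    subst h'
    exact ⟨SimpleGraph.Walk.nil, by simp⟩
  | succ n ih =>
    intro u v h
    rw [Hreach, Bool.or_eq_true, List.any_eq_true] at h
    rcases h with h | ⟨x, hx, h⟩
    · have h' : u = v := by simpa using h
      subst h'
      exact ⟨SimpleGraph.Walk.nil, by simp⟩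
    · obtain ⟨p, hp⟩ := ih x v h
      have hadj : Hgraph.Adj u x := by
        have := (List.mem_filter.1 hx).2
        rw [Hgraph, SimpleGraph.fromRel_adj]
        exact of_decide_eq_true this
      exact ⟨SimpleGraph.Walk.cons hadj p, by simpa using hp⟩

theorem Hreach_all : ∀ u v, Hreach 4 u v = true := by
  decide +kernel

/-- Distance from the vertex `0`, as a table. -/
def Hpot (u : Fin 15) : ℕ :=
  [0, 1, 2, 2, 1, 2, 3, 3, 4, 3, 4, 4, 3, 2, 3].getD u.val 0

theorem Hpot_edges : ∀ e ∈ Hedges, Hpot e.2 ≤ Hpot e.1 + 1 ∧ Hpot e.1 ≤ Hpot e.2 + 1 := by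
  decide +kernel

theorem Hpot_walk {u v : Fin 15} (p : Hgraph.Walk u v) : Hpot v ≤ Hpot u + p.length := by
  induction p with
  | nil => simp
  | cons h p ih =>
    rw [Hgraph, SimpleGraph.fromRel_adj] at h
    rw [SimpleGraph.Walk.length_cons]
    rcases h.2 with h | h
    · have := (Hpot_edges _ h).1
      dsimp only at this
      omega
    · have := (Hpot_edges _ h).2
      dsimp only at this
      omega

/-- `H` is connected and has diameter exactly `4`. -/
theorem stmt1 :
    Hgraph.Connected ∧ (∀ u v, Hgraph.dist u v ≤ 4) ∧
    ∃ u v, Hgraph.dist u v = 4 := by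
  have hw := fun u v => Hreach_walk 4 u v (Hreach_all u v)
  have hc : Hgraph.Connected :=
    (SimpleGraph.connected_iff _).2 ⟨fun u v => ⟨(hw u v).choose⟩, ⟨0⟩⟩
  have hd : ∀ u v, Hgraph.dist u v ≤ 4 := fun u v => by
    obtain ⟨p, hp⟩ := hw u v
    exact (SimpleGraph.dist_le p).trans hp
  refine ⟨hc, hd, 0, 8, le_antisymm (hd _ _) ?_⟩
  obtain ⟨p, hp⟩ := hc.exists_walk_length_eq_dist 0 8
  have h := Hpot_walk p
  have h0 : Hpot 0 = 0 := rfl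
  have h8 : Hpot 8 = 4 := rfl
  omega
end

section
/- Every 2-packing in the graph H has at most 5 vertices. -/
def clsH : Fin 15 → Fin 5 := ![0,0,0,0,1,1,1,2,2,2,2,3,3,3,4]

def adjH (u v : Fin 15) : Prop := u ≠ v ∧ ((u, v) ∈ Hedges ∨ (v, u) ∈ Hedges)

instance : DecidableRel adjH := fun u v => by unfold adjH; infer_instance

set_option maxRecDepth 100000 in
set_option maxHeartbeats 4000000 in
theorem clsH_spec : ∀ u v : Fin 15, clsH u = clsH v → u ≠ v →
    adjH u v ∨ ∃ c : Fin 15, adjH u c ∧ adjH c v := by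
  decide

theorem adjH_adj {u v : Fin 15} (h : adjH u v) : Hgraph.Adj u v := by
  unfold Hgraph
  rw [SimpleGraph.fromRel_adj]
  exact h

/-- Every `2`-packing in `H` has at most `5` vertices. -/
theorem stmt2 (W : Set (Fin 15)) (hW : IsPacking Hgraph 2 W) : W.ncard ≤ 5 := by
  have hinj : Set.InjOn clsH W := by
    intro u hu v hv h
    by_contra hne
    have hd := hW u hu v hv hne
    rcases clsH_spec u v h hne with h1 | ⟨c, h1, h2⟩
    · have := SimpleGraph.dist_le (SimpleGraph.Walk.cons (adjH_adj h1) SimpleGraph.Walk.nil)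
      simp at this
      omega
    · have := SimpleGraph.dist_le (SimpleGraph.Walk.cons (adjH_adj h1)
        (SimpleGraph.Walk.cons (adjH_adj h2) SimpleGraph.Walk.nil))
      simp at this
      omega
  rw [← Set.ncard_image_of_injOn hinj]
  have := Set.ncard_le_card (clsH '' W)
  simpa using this
end

section
/- Every 3-packing in the graph H has at most 2 vertices. -/
def nbH : Fin 15 → List (Fin 15) := fun u =>
  u :: Hedges.filterMap (fun e => if e.1 = u then some e.2 else if e.2 = u then some e.1 else none)

def nearH (u v : Fin 15) : Bool :=
  (nbH u).any fun a => (nbH v).any fun b => decide (b ∈ nbH a)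

lemma nbH_dist {u v : Fin 15} (h : v ∈ nbH u) : ∃ p : Hgraph.Walk u v, p.length ≤ 1 := by
  by_cases huv : u = v
  · subst huv
    exact ⟨.nil, by simp⟩
  · have key : ∀ u v : Fin 15, v ∈ nbH u → u = v ∨ ((u, v) ∈ Hedges ∨ (v, u) ∈ Hedges) := by
      decide +kernel
    have ha : Hgraph.Adj u v := by
      rw [Hgraph, SimpleGraph.fromRel_adj]
      exact ⟨huv, (key u v h).resolve_left huv⟩
    exact ⟨ha.toWalk, by simp⟩

lemma nearH_dist {u v : Fin 15} (h : nearH u v = true) : Hgraph.dist u v ≤ 3 := by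
  simp only [nearH, List.any_eq_true, decide_eq_true_eq] at h
  obtain ⟨a, ha, b, hb, hab⟩ := h
  obtain ⟨p, hp⟩ := nbH_dist ha
  obtain ⟨q, hq⟩ := nbH_dist hab
  obtain ⟨r, hr⟩ := nbH_dist hb
  refine (SimpleGraph.dist_le ((p.append q).append r.reverse)).trans ?_
  simp only [SimpleGraph.Walk.length_append, SimpleGraph.Walk.length_reverse]
  omega

lemma nearH_triple : ∀ u v w : Fin 15, nearH u v = true ∨ nearH u w = true ∨ nearH v w = true := by
  decide +kernel

/-- Every `3`-packing in `H` has at most `2` vertices. -/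
theorem stmt3 (W : Set (Fin 15)) (hW : IsPacking Hgraph 3 W) : W.ncard ≤ 2 := by
  by_contra hc
  obtain ⟨a, b, c, ha, hb, hcW, hab, hac, hbc⟩ := (Set.two_lt_ncard_iff (Set.toFinite W)).1 (not_le.1 hc)
  have h1 := hW a ha b hb hab
  have h2 := hW a ha c hcW hac
  have h3 := hW b hb c hcW hbc
  rcases nearH_triple a b c with h | h | h <;> have := nearH_dist h <;> omega
end

section
/- Every 2-packing in the graph Y has at most 2 vertices. -/
/-- Edges of `Y`; vertices `y1,…,y7` are `0,…,6`. -/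
def Yedges : List (Fin 7 × Fin 7) :=
  [(0,1),(1,2),(2,6),(6,5),(5,4),(4,0),(1,3),(3,5)]

/-- The graph `Y` induced by `y1,…,y7`. -/
def Ygraph : SimpleGraph (Fin 7) :=
  SimpleGraph.fromRel (fun u v => (u, v) ∈ Yedges)


set_option maxRecDepth 100000 in
set_option synthInstance.maxHeartbeats 400000 in
set_option synthInstance.maxSize 4000 in
set_option maxHeartbeats 4000000 in
theorem Yclose_walk : ∀ u v w : Fin 7, u ≠ v → u ≠ w → v ≠ w →
    (∃ a b : Fin 7, a ≠ b ∧ (a = u ∨ a = v ∨ a = w) ∧ (b = u ∨ b = v ∨ b = w) ∧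
      ((a ≠ b ∧ ((a, b) ∈ Yedges ∨ (b, a) ∈ Yedges)) ∨
        ∃ c, (a ≠ c ∧ ((a, c) ∈ Yedges ∨ (c, a) ∈ Yedges)) ∧
          (c ≠ b ∧ ((c, b) ∈ Yedges ∨ (b, c) ∈ Yedges)))) := by
  decide +kernel

/-- Every `2`-packing in `Y` has at most `2` vertices. -/
theorem stmt5 (W : Set (Fin 7)) (hW : IsPacking Ygraph 2 W) : W.ncard ≤ 2 := by
  by_contra h
  have h2 : 2 < W.ncard := by omega
  obtain ⟨u, v, w, hu, hv, hw, huv, huw, hvw⟩ := (Set.two_lt_ncard_iff (Set.toFinite W)).1 h2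
  obtain ⟨a, b, hab, ha, hb, hc⟩ := Yclose_walk u v w huv huw hvw
  have haW : a ∈ W := by rcases ha with rfl | rfl | rfl <;> assumption
  have hbW : b ∈ W := by rcases hb with rfl | rfl | rfl <;> assumption
  have hd := hW a haW b hbW hab
  rcases hc with h1 | ⟨c, h1, h3⟩
  · have e : Ygraph.Adj a b := h1
    have := SimpleGraph.dist_le e.toWalk
    simp at this
    omega
  · have e : Ygraph.Adj a c := h1
    have e' : Ygraph.Adj c b := h3
    have := SimpleGraph.dist_le (SimpleGraph.Walk.cons e e'.toWalk)
    simp at this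
    omega
end

section
/- The graph G_0 is connected and has diameter at most 6: any two vertices of G_0 are at distance at most 6. -/
/-- Glue two disjoint copies of `G` together with five new vertices
`Sum.inr (Sum.inr i)` for `i : Fin 5`: the `i`-th new vertex is adjacent
exactly to `p i` in the first copy and to `q i` in the second copy. -/
def glue {V : Type*} (G : SimpleGraph V) (p q : Fin 5 → V) :
    SimpleGraph (V ⊕ V ⊕ Fin 5) :=
  SimpleGraph.fromRel (fun u v =>
    match u, v with
    | Sum.inl a, Sum.inl b => G.Adj a b
    | Sum.inr (Sum.inl a), Sum.inr (Sum.inl b) => G.Adj a b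
    | Sum.inr (Sum.inr i), Sum.inl a => a = p i
    | Sum.inr (Sum.inr i), Sum.inr (Sum.inl b) => b = q i
    | _, _ => False)

/-- Attachment points of `a,b,c,d,x` in the first copy (`H'`):
`a ↦ y5`, `b ↦ z7`, `c ↦ y3`, `d ↦ z1`, `x ↦ w`. -/
def pH : Fin 5 → Fin 15 := ![4, 13, 2, 7, 14]

/-- Attachment points of `a,b,c,d,x` in the second copy (`H''`):
`a ↦ y1`, `b ↦ z3`, `c ↦ z5`, `d ↦ y7`, `x ↦ w`. -/
def qH : Fin 5 → Fin 15 := ![0, 9, 11, 6, 14]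

/-- The graph `G₀`: two disjoint copies of `H` plus the five vertices
`a,b,c,d,x`, which are `Sum.inr (Sum.inr 0), …, Sum.inr (Sum.inr 4)`. -/
def G₀ : SimpleGraph (Fin 15 ⊕ Fin 15 ⊕ Fin 5) := glue Hgraph pH qH


instance decH : DecidableRel Hgraph.Adj := fun a b =>
  inferInstanceAs (Decidable (a ≠ b ∧ ((a, b) ∈ Hedges ∨ (b, a) ∈ Hedges)))

def hadj (a b : Fin 15) : Bool :=
  Nat.testBit 1698392922965107409761206974414086546170651956413610755469617823762 (15 * a.val + b.val)

theorem hadj_iff : ∀ a b : Fin 15, hadj a b = true → Hgraph.Adj a b := by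
  decide +kernel

def relB : (Fin 15 ⊕ Fin 15 ⊕ Fin 5) → (Fin 15 ⊕ Fin 15 ⊕ Fin 5) → Bool
  | Sum.inl a, Sum.inl b => hadj a b
  | Sum.inr (Sum.inl a), Sum.inr (Sum.inl b) => hadj a b
  | Sum.inr (Sum.inr i), Sum.inl a => decide (a = pH i)
  | Sum.inr (Sum.inr i), Sum.inr (Sum.inl b) => decide (b = qH i)
  | _, _ => false

theorem adj_of_relB (u v : Fin 15 ⊕ Fin 15 ⊕ Fin 5) (hne : u ≠ v)
    (h : (relB u v || relB v u) = true) : G₀.Adj u v := by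
  rw [G₀, glue, SimpleGraph.fromRel_adj]
  refine ⟨hne, ?_⟩
  rcases u with a | a | a <;> rcases v with b | b | b <;> simp only [relB, Bool.or_eq_true, decide_eq_true_eq, Bool.false_eq_true, or_false, false_or] at h ⊢ <;>
    first
    | exact h
    | exact h.imp (hadj_iff _ _) (hadj_iff _ _)

def vlist : List (Fin 15 ⊕ Fin 15 ⊕ Fin 5) :=
  (List.finRange 15).map Sum.inl ++ (List.finRange 15).map (fun a => Sum.inr (Sum.inl a)) ++
    (List.finRange 5).map (fun a => Sum.inr (Sum.inr a))

/-- vertices at distance at most `n` from `u` -/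
def ball (u : Fin 15 ⊕ Fin 15 ⊕ Fin 5) : ℕ → List (Fin 15 ⊕ Fin 15 ⊕ Fin 5)
  | 0 => [u]
  | n + 1 => let l := ball u n
    vlist.filter (fun v => l.any (fun w => decide (w = v) || (relB w v || relB v w)))

theorem walk_of_ball (u : Fin 15 ⊕ Fin 15 ⊕ Fin 5) (n : ℕ) :
    ∀ v ∈ ball u n, ∃ p : G₀.Walk u v, p.length ≤ n := by
  induction n with
  | zero =>
    intro v hv
    obtain rfl : v = u := by simpa [ball] using hv
    exact ⟨SimpleGraph.Walk.nil, by simp⟩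
  | succ n ih =>
    intro v hv
    have h := (List.mem_filter.1 hv).2
    obtain ⟨w, hw, hwv⟩ := List.any_eq_true.1 h
    obtain ⟨p, hp⟩ := ih w hw
    by_cases e : w = v
    · subst e
      exact ⟨p, by omega⟩
    · have ha : G₀.Adj w v := adj_of_relB w v e (by simpa [e] using hwv)
      exact ⟨p.concat ha, by rw [SimpleGraph.Walk.length_concat]; omega⟩

theorem mem_vlist (u : Fin 15 ⊕ Fin 15 ⊕ Fin 5) : u ∈ vlist := by
  rcases u with a | a | a <;> simp [vlist]

theorem ball_all' : ∀ u ∈ vlist, ∀ v ∈ vlist, v ∈ ball u 6 := by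
  have h : (vlist.all fun u => vlist.all fun v => (ball u 6).any fun w => decide (w = v)) = true := by
    decide +kernel
  simpa using h

theorem ball_all (u v : Fin 15 ⊕ Fin 15 ⊕ Fin 5) : v ∈ ball u 6 :=
  ball_all' u (mem_vlist u) v (mem_vlist v)

/-- `G₀` is connected and any two of its vertices are at distance at most `6`. -/
theorem stmt7 :
    G₀.Connected ∧ ∀ u v, G₀.dist u v ≤ 6 := by
  have h := fun u v => walk_of_ball u 6 v (ball_all u v)
  refine ⟨⟨fun u v => ?_⟩, fun u v => ?_⟩
  · obtain ⟨p, -⟩ := h u v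
    exact ⟨p⟩
  · obtain ⟨p, hp⟩ := h u v
    exact (SimpleGraph.dist_le p).trans hp
end

section
/- The packing chromatic number of the graph G_0 is at least 9; that is, G_0 admits no k-packing coloring for any k ≤ 8. -/
namespace Pk

structure Row where
  v : ℕ
  bit : ℕ
  a1 : ℕ
  a2 : ℕ
  a3 : ℕ
  o : ℕ

def tabD : List ℕ := [
  23088465706382511968727839085704,
  17315793807467347641062312714817,
  21684616847260764181835976881162,
  12958112151878169086182059188362,
  23790358624982751877821985490129,
  18017708525185751822850381320850,
  22386550950885193938381117105235,
  21121376230714597816318890198611,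
  16752533805016635731468757120668,
  22525183904825349930633135237347,
  12394830388764001149947602908380,
  21823290986213395877260616939676,
  17454426761407503633159996679907,
  23227074103279087275859451385626,
  7967799614210191254075493659347,
  23255215181493097435020674574691,
  17482567460504008760441341098860,
  21831622178352967597672749255981,
  12492274266313232616232045955437,
  22533474032665187748230678854508,
  16919283280125908399719429098285,
  21288149921531529247972320795365,
  22377531629626772190487609793253,
  18011143284973093919878681119533,
  23783793423812668902202074872684,
  13584112511747596245774359779630,
  22943248170080685040408390949020,
  18574381528084768662652087098085,
  23079383483938992340965931797805,
  7967445917056109736959449388901,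
  28948678270743602077839771113242,
  28922659375463323181866361661795,
  27310877477256547409360279160403,
  25647113648432393954450159327388,
  3621215287702180350346646373660]

def nb : List (List ℕ) := [
  [1, 4], [0, 2, 3], [1, 6, 7, 32], [1, 5, 14], [0, 5, 13, 30], [3, 4, 6], [2, 5], [2, 8, 11, 33], [7, 9, 10], [8, 13], [8, 12, 14], [7, 12], [10, 11, 13], [4, 9, 12, 31], [3, 10, 34], [16, 19, 30], [15, 17, 18], [16, 21, 22], [16, 20, 29], [15, 20, 28], [18, 19, 21], [17, 20, 33], [17, 23, 26], [22, 24, 25], [23, 28, 31], [23, 27, 29], [22, 27, 32], [25, 26, 28], [19, 24, 27], [18, 25, 34], [4, 15], [13, 24], [2, 26], [7, 21], [14, 29]]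

def part4 (v : ℕ) : ℕ := 103762935415041250901 / 4 ^ v % 4

def part4' (v : ℕ) : ℕ := 417005568 / 2 ^ v % 2

def part5 (v : ℕ) : ℕ := 273287745 / 2 ^ v % 2

def rows : List Row := [
  ⟨32, 4294967296, 67108868, 205521094, 9105967599, 8⟩,
  ⟨28, 268435456, 151519232, 2409136128, 8321343488, 7⟩,
  ⟨19, 524288, 269516800, 1496678400, 12880150544, 7⟩,
  ⟨15, 32768, 1074331648, 1344208912, 2038374449, 6⟩,
  ⟨23, 8388608, 54525952, 3208773632, 24686567424, 6⟩,
  ⟨24, 16777216, 2424307712, 2596806656, 3202003472, 6⟩,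
  ⟨22, 4194304, 75628544, 4557307904, 16101376004, 5⟩,
  ⟨26, 67108864, 4433379328, 4743888900, 5300224198, 5⟩,
  ⟨27, 134217728, 369098752, 5230821376, 24559648772, 5⟩,
  ⟨25, 33554432, 679477248, 18216124416, 24660361216, 5⟩,
  ⟨29, 536870912, 17213685760, 17357422592, 17716724744, 5⟩,
  ⟨16, 65536, 425984, 1618903040, 27766194192, 4⟩,
  ⟨18, 262144, 537985024, 17754193920, 27833122816, 4⟩,
  ⟨20, 1048576, 2883584, 9398353920, 27840708736, 4⟩,
  ⟨17, 131072, 6356992, 8673132544, 14763786368, 4⟩,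
  ⟨21, 2097152, 8591114240, 8596160640, 9476999556, 4⟩,
  ⟨34, 17179869184, 536887296, 570704904, 714429738, 4⟩,
  ⟨31, 2147483648, 16785408, 293614096, 1539850033, 4⟩,
  ⟨30, 1073741824, 32784, 630833, 2417996411, 4⟩,
  ⟨14, 16384, 17179870216, 17716745514, 17750573055, 3⟩,
  ⟨3, 8, 16418, 17179886711, 23085479415, 3⟩,
  ⟨2, 4, 4294967490, 12952013291, 13092544507, 2⟩,
  ⟨4, 16, 1073750049, 3221271147, 3238657903, 2⟩,
  ⟨13, 8192, 2147488272, 3238010673, 3514884091, 1⟩,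
  ⟨1, 2, 13, 4294983933, 31205649917, 1⟩,
  ⟨5, 32, 88, 1073766495, 24696125151, 1⟩,
  ⟨6, 64, 36, 4294967486, 14025779647, 1⟩,
  ⟨0, 1, 18, 1073750078, 7516254974, 1⟩,
  ⟨9, 512, 8448, 2147497360, 11827969461, 1⟩,
  ⟨10, 1024, 20736, 17179900808, 28454190014, 0⟩,
  ⟨12, 4096, 11264, 2147512208, 29007835069, 0⟩,
  ⟨8, 256, 1664, 8589966980, 32214384350, 0⟩,
  ⟨7, 128, 8589936900, 12887007046, 12955320175, 0⟩,
  ⟨11, 2048, 4224, 8589948292, 15034513366, 0⟩,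
  ⟨33, 8589934592, 2097280, 3279236, 4303298502, 0⟩]

def dD (u v : ℕ) : ℕ := tabD.getD u 0 / 8 ^ v % 8

/-- force evaluation of a natural number -/
noncomputable def force (x : ℕ) (k : ℕ → Bool) : Bool :=
  Nat.rec (k 0) (fun m _ => k (Nat.succ m)) x

theorem force_eq (x : ℕ) (k : ℕ → Bool) : force x k = k x := by
  cases x <;> rfl

noncomputable def se (leaf : List ℕ → Bool) (rs : List Row) :
    ℕ → ℕ → ℕ → ℕ → List ℕ → Bool :=
  List.rec (motive := fun _ => ℕ → ℕ → ℕ → ℕ → List ℕ → Bool)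
    (fun _ _ _ _ O => leaf O)
    (fun r _ ih f1 f2 f3 b O =>
      cond (Nat.ble r.o b)
        (and (cond (Nat.beq (Nat.land f1 r.bit) 0)
            (force (Nat.lor f1 r.a1) fun g => ih g f2 f3 b O) true)
          (and (cond (Nat.beq (Nat.land f2 r.bit) 0)
              (force (Nat.lor f2 r.a2) fun g => ih f1 g f3 b O) true)
            (and (cond (Nat.beq (Nat.land f3 r.bit) 0)
              (force (Nat.lor f3 r.a3) fun g => ih f1 f2 g b O) true)
            (cond (Nat.ble (Nat.succ r.o) b)
              (force (Nat.pred b) fun b' => ih f1 f2 f3 b' (r.v :: O)) true))))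
        true)
    rs

noncomputable def chk (rs : List Row) : Bool :=
  List.rec (motive := fun _ => Bool) true
    (fun r rs ih => and (cond (Nat.beq r.o 0) true
      (se (fun _ => false) rs 0 0 0 (Nat.pred r.o) [])) ih) rs

def leafOk (L : List ℕ) : Bool :=
  decide (8 ≤ L.length) && L.all fun u => L.all fun v =>
    decide (u = v ∨ part4' u ≠ part4' v ∨ dD u v ≤ 4)

set_option maxRecDepth 100000 in
theorem chk_rows : chk rows = true := by decide +kernel

set_option maxRecDepth 100000 in
theorem se_rows : se leafOk rows 0 0 0 8 [] = true := by decide +kernel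

def RowOk (r : Row) : Prop :=
  r.v < 35 ∧ r.bit = 2 ^ r.v ∧ ∀ u < 35,
    (r.a1.testBit u = true → u ≠ r.v ∧ dD r.v u ≤ 1) ∧
    (r.a2.testBit u = true → u ≠ r.v ∧ dD r.v u ≤ 2) ∧
    (r.a3.testBit u = true → u ≠ r.v ∧ dD r.v u ≤ 3)

instance (r : Row) : Decidable (RowOk r) := by unfold RowOk; infer_instance

set_option maxRecDepth 100000 in
theorem rows_ok : ∀ r ∈ rows, RowOk r := by decide +kernel

/-- the vertices with color at least 4 -/
def oth (c : ℕ → ℕ) (rs : List Row) : List ℕ :=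
  (rs.map Row.v).filter fun v => decide (4 ≤ c v)

def BV (c : ℕ → ℕ) : List Row → Prop
  | [] => True
  | r :: rs => r.o ≤ (oth c rs).length ∧ BV c rs

def Good (c : ℕ → ℕ) : Prop :=
  (∀ v < 35, 1 ≤ c v ∧ c v ≤ 8) ∧
    ∀ u < 35, ∀ v < 35, u ≠ v → c u = c v → c u < dD u v

def Pinv (c : ℕ → ℕ) (i f : ℕ) : Prop := ∀ u < 35, f.testBit u = true → c u ≠ i

theorem land_bit {f v : ℕ} (h : f.testBit v = false) : Nat.beq (Nat.land f (2 ^ v)) 0 = true := by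
  have : Nat.land f (2 ^ v) = f &&& 2 ^ v := rfl
  rw [this, Nat.and_two_pow, h]
  simp

theorem inv_lor {c : ℕ → ℕ} (hc : Good c) {i f a v : ℕ} (hv : v < 35) (hi : Pinv c i f)
    (ha : ∀ u < 35, a.testBit u = true → u ≠ v ∧ dD v u ≤ i) (hcv : c v = i) :
    Pinv c i (Nat.lor f a) := by
  intro u hu h
  have h2 : (f ||| a).testBit u = true := h
  rw [Nat.testBit_or, Bool.or_eq_true] at h2
  rcases h2 with h2 | h2
  · exact hi u hu h2
  · obtain ⟨h3, h4⟩ := ha u hu h2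
    intro h5
    have := hc.2 v hv u hu (Ne.symm h3) (by omega)
    omega

theorem se_sound {c : ℕ → ℕ} (hc : Good c) (leaf : List ℕ → Bool) (rs : List Row) :
    ∀ (f1 f2 f3 b : ℕ) (O : List ℕ), (∀ r ∈ rs, RowOk r) → BV c rs →
      Pinv c 1 f1 → Pinv c 2 f2 → Pinv c 3 f3 → se leaf rs f1 f2 f3 b O = true →
      (oth c rs).length ≤ b → leaf ((oth c rs).reverse ++ O) = true := by
  induction rs with
  | nil =>
    intro f1 f2 f3 b O _ _ _ _ _ h _
    have h' : leaf O = true := h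
    simpa [oth] using h'
  | cons r rs ih =>
    intro f1 f2 f3 b O hr hb h1 h2 h3 h hl
    have hrr := hr r (by simp)
    have hrs : ∀ r ∈ rs, RowOk r := fun x hx => hr x (by simp [hx])
    obtain ⟨hv, hbit, hu⟩ := hrr
    obtain ⟨hb1, hb2⟩ := hb
    have hmono : (oth c rs).length ≤ (oth c (r :: rs)).length := by
      simp only [oth, List.map_cons, List.filter_cons]
      split <;> simp
    have e : se leaf (r :: rs) f1 f2 f3 b O =
      cond (Nat.ble r.o b)
        (and (cond (Nat.beq (Nat.land f1 r.bit) 0)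
            (force (Nat.lor f1 r.a1) fun g => se leaf rs g f2 f3 b O) true)
          (and (cond (Nat.beq (Nat.land f2 r.bit) 0)
              (force (Nat.lor f2 r.a2) fun g => se leaf rs f1 g f3 b O) true)
            (and (cond (Nat.beq (Nat.land f3 r.bit) 0)
              (force (Nat.lor f3 r.a3) fun g => se leaf rs f1 f2 g b O) true)
            (cond (Nat.ble (Nat.succ r.o) b)
              (force (Nat.pred b) fun b' => se leaf rs f1 f2 f3 b' (r.v :: O)) true))))
        true := rfl
    rw [e, Nat.ble_eq_true_of_le (by omega : r.o ≤ b)] at h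
    simp only [force_eq, cond_true, Bool.and_eq_true] at h
    obtain ⟨k1, k2, k3, k4⟩ := h
    have hc1 := hc.1 r.v hv
    by_cases h4 : 4 ≤ c r.v
    · have e2 : oth c (r :: rs) = r.v :: oth c rs := by simp [oth, h4]
      rw [e2] at hl ⊢
      simp only [List.length_cons] at hl
      rw [Nat.ble_eq_true_of_le (by omega : Nat.succ r.o ≤ b), cond_true] at k4
      have := ih f1 f2 f3 (Nat.pred b) (r.v :: O) hrs hb2 h1 h2 h3 k4
        (by rw [Nat.pred_eq_sub_one]; omega)
      simpa using this
    · have e2 : oth c (r :: rs) = oth c rs := by simp [oth, h4]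
      rw [e2] at hl ⊢
      have : c r.v = 1 ∨ c r.v = 2 ∨ c r.v = 3 := by omega
      rcases this with hh | hh | hh
      · have ht : f1.testBit r.v = false := by
          by_contra hx; exact h1 _ hv (by simpa using hx) hh
        rw [hbit, land_bit ht, cond_true] at k1
        exact ih _ _ _ _ _ hrs hb2 (inv_lor hc hv h1 (fun u hu' => (hu u hu').1) hh) h2 h3 k1 hl
      · have ht : f2.testBit r.v = false := by
          by_contra hx; exact h2 _ hv (by simpa using hx) hh
        rw [hbit, land_bit ht, cond_true] at k2
        exact ih _ _ _ _ _ hrs hb2 h1 (inv_lor hc hv h2 (fun u hu' => (hu u hu').2.1) hh) h3 k2 hl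
      · have ht : f3.testBit r.v = false := by
          by_contra hx; exact h3 _ hv (by simpa using hx) hh
        rw [hbit, land_bit ht, cond_true] at k3
        exact ih _ _ _ _ _ hrs hb2 h1 h2 (inv_lor hc hv h3 (fun u hu' => (hu u hu').2.2) hh) k3 hl

theorem pinv_zero (c : ℕ → ℕ) (i : ℕ) : Pinv c i 0 := by
  intro u _ h; simp at h

theorem chk_sound {c : ℕ → ℕ} (hc : Good c) (rs : List Row) (hr : ∀ r ∈ rs, RowOk r)
    (h : chk rs = true) : BV c rs := by
  induction rs with
  | nil => trivial
  | cons r rs ih =>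
    have hrs : ∀ r ∈ rs, RowOk r := fun x hx => hr x (by simp [hx])
    have e : chk (r :: rs) = and (cond (Nat.beq r.o 0) true
      (se (fun _ => false) rs 0 0 0 (Nat.pred r.o) [])) (chk rs) := rfl
    rw [e, Bool.and_eq_true] at h
    have hB := ih hrs h.2
    refine ⟨?_, hB⟩
    by_contra hlt
    have h0 : Nat.beq r.o 0 = false := by
      cases hx : r.o with
      | zero => omega
      | succ m => rfl
    rw [h0, cond_false] at h
    have := se_sound hc (fun _ => false) rs 0 0 0 _ [] hrs hB (pinv_zero _ _) (pinv_zero _ _)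
      (pinv_zero _ _) h.1 (by rw [Nat.pred_eq_sub_one]; omega)
    simp at this

set_option maxRecDepth 100000 in
theorem part_ok : ∀ u < 35, ∀ v < 35,
    (part4 u = part4 v → dD u v ≤ 4) ∧ (part5 u = part5 v → dD u v ≤ 5) ∧ dD u v ≤ 6 ∧
    part4 u < 3 ∧ part5 u < 2 ∧ part4' u < 2 := by decide +kernel

theorem len_le (L : List ℕ) (hn : L.Nodup) (key : ℕ → ℕ) (m : ℕ) (hk : ∀ u ∈ L, key u < m)
    (hi : ∀ u ∈ L, ∀ v ∈ L, key u = key v → u = v) : L.length ≤ m := by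
  have h1 : (L.map key).Nodup := by
    rw [List.nodup_map_iff_inj_on hn]; exact hi
  have h2 : (L.map key) ⊆ List.range m := by
    intro x hx
    obtain ⟨u, hu, rfl⟩ := List.mem_map.1 hx
    exact List.mem_range.2 (hk u hu)
  have := (List.Nodup.subperm h1 h2).length_le
  simpa using this

theorem no_good (c : ℕ → ℕ) (hc : Good c) : False := by
  have hB := chk_sound hc rows rows_ok chk_rows
  have hn : (oth c rows).Nodup := by
    apply List.Nodup.filter
    decide +kernel
  have hm : ∀ u ∈ oth c rows, u < 35 ∧ 4 ≤ c u := by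
    intro u hu
    simp only [oth, List.mem_filter, List.mem_map, decide_eq_true_eq] at hu
    obtain ⟨⟨r, hr, rfl⟩, h⟩ := hu
    exact ⟨(rows_ok r hr).1, h⟩
  have h8 : (oth c rows).length ≤ 8 := by
    apply len_le _ hn
      (fun v => if c v = 4 then part4 v else if c v = 5 then 3 + part5 v else c v - 1)
    · intro u hu
      have := part_ok u (hm u hu).1 u (hm u hu).1
      have := hc.1 u (hm u hu).1
      try dsimp only
      split_ifs <;> omega
    · intro u hu v hv h
      by_contra hne
      obtain ⟨hu1, hu2⟩ := hm u hu
      obtain ⟨hv1, hv2⟩ := hm v hv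
      have p1 := part_ok u hu1 v hv1
      have p2 := part_ok v hv1 u hu1
      have g := hc.2 u hu1 v hv1 hne
      try dsimp only at h
      split_ifs at h <;> omega
  have hleaf := se_sound hc leafOk rows 0 0 0 8 [] rows_ok hB (pinv_zero _ _) (pinv_zero _ _)
    (pinv_zero _ _) se_rows h8
  simp only [leafOk, List.append_nil, Bool.and_eq_true, List.all_eq_true, decide_eq_true_eq,
    List.length_reverse, List.mem_reverse] at hleaf
  have h7 : (oth c rows).length ≤ 7 := by
    apply len_le _ hn
      (fun v => if c v = 4 then part4' v else if c v = 5 then 2 + part5 v else c v - 2)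
    · intro u hu
      have := part_ok u (hm u hu).1 u (hm u hu).1
      have := hc.1 u (hm u hu).1
      try dsimp only
      split_ifs <;> omega
    · intro u hu v hv h
      by_contra hne
      obtain ⟨hu1, hu2⟩ := hm u hu
      obtain ⟨hv1, hv2⟩ := hm v hv
      have p1 := part_ok u hu1 v hv1
      have p2 := part_ok v hv1 u hu1
      have g := hc.2 u hu1 v hv1 hne
      have l := hleaf.2 u hu v hv
      try dsimp only at h
      split_ifs at h <;> omega
  omega

def toV (i : ℕ) : Fin 15 ⊕ Fin 15 ⊕ Fin 5 :=
  if i < 15 then Sum.inl (Fin.ofNat 15 i)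
  else if i < 30 then Sum.inr (Sum.inl (Fin.ofNat 15 (i - 15)))
  else Sum.inr (Sum.inr (Fin.ofNat 5 (i - 30)))

set_option maxRecDepth 100000 in
theorem toV_inj : ∀ u < 35, ∀ v < 35, toV u = toV v → u = v := by decide +kernel

theorem adj1 (a b : Fin 15) (h : a ≠ b ∧ ((a, b) ∈ Hedges ∨ (b, a) ∈ Hedges)) :
    G₀.Adj (Sum.inl a) (Sum.inl b) := by
  have : Hgraph.Adj a b := by simpa [Hgraph, SimpleGraph.fromRel_adj] using h
  simp [G₀, glue, SimpleGraph.fromRel_adj, this, h.1]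

theorem adj2 (a b : Fin 15) (h : a ≠ b ∧ ((a, b) ∈ Hedges ∨ (b, a) ∈ Hedges)) :
    G₀.Adj (Sum.inr (Sum.inl a)) (Sum.inr (Sum.inl b)) := by
  have : Hgraph.Adj a b := by simpa [Hgraph, SimpleGraph.fromRel_adj] using h
  simp [G₀, glue, SimpleGraph.fromRel_adj, this, h.1]

theorem adj3 (i : Fin 5) (a : Fin 15) (h : a = pH i) :
    G₀.Adj (Sum.inr (Sum.inr i)) (Sum.inl a) := by
  simp [G₀, glue, SimpleGraph.fromRel_adj, h]

theorem adj4 (i : Fin 5) (a : Fin 15) (h : a = qH i) :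
    G₀.Adj (Sum.inr (Sum.inr i)) (Sum.inr (Sum.inl a)) := by
  simp [G₀, glue, SimpleGraph.fromRel_adj, h]

def adjB : Fin 15 ⊕ Fin 15 ⊕ Fin 5 → Fin 15 ⊕ Fin 15 ⊕ Fin 5 → Bool
  | Sum.inl a, Sum.inl b => decide (a ≠ b ∧ ((a, b) ∈ Hedges ∨ (b, a) ∈ Hedges))
  | Sum.inr (Sum.inl a), Sum.inr (Sum.inl b) =>
    decide (a ≠ b ∧ ((a, b) ∈ Hedges ∨ (b, a) ∈ Hedges))
  | Sum.inr (Sum.inr i), Sum.inl a => decide (a = pH i)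
  | Sum.inl a, Sum.inr (Sum.inr i) => decide (a = pH i)
  | Sum.inr (Sum.inr i), Sum.inr (Sum.inl a) => decide (a = qH i)
  | Sum.inr (Sum.inl a), Sum.inr (Sum.inr i) => decide (a = qH i)
  | _, _ => false

theorem adjB_sound (x y : Fin 15 ⊕ Fin 15 ⊕ Fin 5) (h : adjB x y = true) : G₀.Adj x y := by
  rcases x with a | a | a <;> rcases y with b | b | b <;>
    simp only [adjB, decide_eq_true_eq, Bool.false_eq_true] at h
  · exact adj1 _ _ h
  · exact (adj3 _ _ h).symm
  · exact adj2 _ _ h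
  · exact (adj4 _ _ h).symm
  · exact adj3 _ _ h
  · exact adj4 _ _ h

set_option maxRecDepth 100000 in
theorem nb_ok : ∀ u < 35, ∀ w ∈ nb.getD u [], w < 35 ∧ adjB (toV u) (toV w) = true := by
  decide +kernel

set_option maxRecDepth 100000 in
theorem dD_ok : ∀ u < 35, ∀ v < 35, u = v ∨ ∃ w ∈ nb.getD u [], dD w v < dD u v := by
  decide +kernel

theorem walk_le (k : ℕ) : ∀ u < 35, ∀ v < 35, dD u v ≤ k →
    ∃ p : G₀.Walk (toV u) (toV v), p.length ≤ dD u v := by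
  induction k with
  | zero =>
    intro u hu v hv h
    rcases dD_ok u hu v hv with rfl | ⟨w, _, h2⟩
    · exact ⟨.nil, by simp⟩
    · omega
  | succ k ih =>
    intro u hu v hv h
    rcases dD_ok u hu v hv with rfl | ⟨w, hw, h2⟩
    · exact ⟨.nil, by simp⟩
    · obtain ⟨hw1, hw2⟩ := nb_ok u hu w hw
      obtain ⟨p, hp⟩ := ih w hw1 v hv (by omega)
      exact ⟨.cons (adjB_sound _ _ hw2) p, by simp only [SimpleGraph.Walk.length_cons]; omega⟩

theorem no_col (k : ℕ) (hk : k ≤ 8) :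
    ¬ ∃ c : Fin 15 ⊕ Fin 15 ⊕ Fin 5 → ℕ, IsPackingColoring G₀ k c := by
  rintro ⟨c, h1, h2⟩
  apply no_good (fun i => c (toV i))
  refine ⟨fun v _ => ⟨(h1 _).1, (h1 _).2.trans hk⟩, ?_⟩
  intro u hu v hv hne he
  obtain ⟨p, hp⟩ := walk_le _ u hu v hv le_rfl
  have h3 := h2 (c (toV u)) (h1 _).1 (h1 _).2 (toV u) rfl (toV v) he.symm
    (fun h => hne (toV_inj u hu v hv h))
  have := SimpleGraph.dist_le p
  show c (toV u) < _
  omega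

end Pk

/-- The packing chromatic number of `G₀` is at least `9`; that is, `G₀` admits
no `k`-packing coloring for any `k ≤ 8`. -/
theorem stmt8 :
    9 ≤ packingChromaticNumber G₀ ∧
    ∀ k ≤ 8, ¬ ∃ c : Fin 15 ⊕ Fin 15 ⊕ Fin 5 → ℕ, IsPackingColoring G₀ k c := by
  refine ⟨?_, Pk.no_col⟩
  have hne : {k | ∃ c : Fin 15 ⊕ Fin 15 ⊕ Fin 5 → ℕ, IsPackingColoring G₀ k c}.Nonempty := by
    let e := Fintype.equivFin (Fin 15 ⊕ Fin 15 ⊕ Fin 5)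
    refine ⟨Fintype.card (Fin 15 ⊕ Fin 15 ⊕ Fin 5), fun v => (e v : ℕ) + 1, ?_, ?_⟩
    · intro v
      have := (e v).isLt
      constructor <;> dsimp only <;> omega
    · intro i _ _ u hu v hv huv
      exfalso
      apply huv
      apply e.injective
      apply Fin.ext
      have h1 : (e u : ℕ) + 1 = i := hu
      have h2 : (e v : ℕ) + 1 = i := hv
      omega
  have hmem := Nat.sInf_mem hne
  by_contra hlt
  exact Pk.no_col (packingChromaticNumber G₀) (by omega) hmem
end

section
/- In the graph G_0, the vertex x is at distance at most 4 from every vertex belonging to the copy H' or to the copy H''. -/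
/-- Parent of each vertex of `H` in a breadth-first tree rooted at `w`. -/
def parH : Fin 15 → Fin 15 := ![1, 3, 1, 14, 5, 3, 5, 8, 10, 8, 14, 12, 10, 12, 14]

theorem parH_adj (u : Fin 15) : u = 14 ∨ Hgraph.Adj (parH u) u := by
  simp only [Hgraph, SimpleGraph.fromRel_adj]
  revert u
  decide

theorem parH_iter (u : Fin 15) : parH (parH (parH u)) = 14 := by
  revert u
  decide

theorem walk_step (u : Fin 15) (n : ℕ)
    (h : ∃ p : Hgraph.Walk 14 (parH u), p.length ≤ n) :
    ∃ p : Hgraph.Walk 14 u, p.length ≤ n + 1 := by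
  rcases parH_adj u with rfl | ha
  · exact ⟨SimpleGraph.Walk.nil, by simp⟩
  · obtain ⟨p, hp⟩ := h
    exact ⟨p.concat ha, by simpa using hp⟩

theorem walkH (u : Fin 15) : ∃ p : Hgraph.Walk 14 u, p.length ≤ 3 := by
  apply walk_step
  apply walk_step
  apply walk_step
  rw [parH_iter]
  exact ⟨SimpleGraph.Walk.nil, by simp⟩

/-- The inclusion of the first copy. -/
def homL : Hgraph →g G₀ where
  toFun := Sum.inl
  map_rel' := by
    intro a b h
    simp only [G₀, glue, SimpleGraph.fromRel_adj]
    exact ⟨fun e => h.ne (Sum.inl.inj e), Or.inl h⟩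

/-- The inclusion of the second copy. -/
def homR : Hgraph →g G₀ where
  toFun := fun v => Sum.inr (Sum.inl v)
  map_rel' := by
    intro a b h
    simp only [G₀, glue, SimpleGraph.fromRel_adj]
    exact ⟨fun e => h.ne (Sum.inl.inj (Sum.inr.inj e)), Or.inl h⟩

theorem adjL : G₀.Adj (Sum.inr (Sum.inr 4)) (homL 14) := by
  simp only [G₀, glue, SimpleGraph.fromRel_adj]
  exact ⟨fun e => (nomatch e), Or.inl rfl⟩

theorem adjR : G₀.Adj (Sum.inr (Sum.inr 4)) (homR 14) := by
  simp only [G₀, glue, SimpleGraph.fromRel_adj]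
  exact ⟨fun e => (nomatch e), Or.inl rfl⟩

/-- In `G₀`, the vertex `x` is at distance at most `4` from every vertex of the
copy `H'` and from every vertex of the copy `H''`. -/
theorem stmt10 (u : Fin 15) :
    G₀.dist (Sum.inr (Sum.inr 4)) (Sum.inl u) ≤ 4 ∧
    G₀.dist (Sum.inr (Sum.inr 4)) (Sum.inr (Sum.inl u)) ≤ 4 := by
  obtain ⟨p, hp⟩ := walkH u
  constructor
  · refine (SimpleGraph.dist_le (SimpleGraph.Walk.cons adjL (p.map homL))).trans ?_
    rw [SimpleGraph.Walk.length_cons, SimpleGraph.Walk.length_map]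
    omega
  · refine (SimpleGraph.dist_le (SimpleGraph.Walk.cons adjR (p.map homR))).trans ?_
    rw [SimpleGraph.Walk.length_cons, SimpleGraph.Walk.length_map]
    omega
end

section
/- The packing chromatic number is unbounded on connected subcubic graphs: for every natural number n there exists a finite connected simple graph G with maximum degree at most 3 such that χρ(G) ≥ n. -/
namespace PackSub

/-- A rooted subcubic graph of radius at most `E` in which every packing colouring
uses colours at least `2 * E` on at least four vertices. -/
def Good (E : ℕ) : Prop :=
  ∃ (V : Type) (_ : Fintype V) (G : SimpleGraph V) (r : V),
    G.Connected ∧ (∀ v, (G.neighborSet v).ncard ≤ 3) ∧ (G.neighborSet r).ncard ≤ 2 ∧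
    (∀ v, G.dist v r ≤ E) ∧
    ∀ c : V → ℕ, (∀ v, 1 ≤ c v) → (∀ u v, u ≠ v → c u = c v → c u < G.dist u v) →
      ∃ s : Finset V, 4 ≤ s.card ∧ ∀ v ∈ s, 2 * E ≤ c v

/-- Two copies of a rooted graph joined to a new root. -/
def dbl {V : Type} (G : SimpleGraph V) (r : V) : SimpleGraph (Option (Bool × V)) where
  Adj x y := match x, y with
    | none, none => False
    | none, some p => p.2 = r
    | some p, none => p.2 = r
    | some p, some q => p.1 = q.1 ∧ G.Adj p.2 q.2
  symm := ⟨by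
    rintro (_ | p) (_ | q) h
    · exact h
    · exact h
    · exact h
    · exact ⟨h.1.symm, h.2.symm⟩⟩
  loopless := ⟨by
    rintro (_ | p) h
    · exact h
    · exact G.loopless.irrefl _ h.2⟩

def emb {V : Type} (G : SimpleGraph V) (r : V) (b : Bool) : G →g dbl G r where
  toFun v := some (b, v)
  map_rel' h := ⟨rfl, h⟩

theorem emb_dist {V : Type} (G : SimpleGraph V) (hG : G.Connected) (r : V) (b : Bool) (u v : V) :
    (dbl G r).dist (some (b, u)) (some (b, v)) ≤ G.dist u v := by
  obtain ⟨p, hp⟩ := hG.exists_walk_length_eq_dist u v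
  rw [← hp, ← SimpleGraph.Walk.length_map (emb G r b) p]
  exact SimpleGraph.dist_le (p.map (emb G r b))

theorem dbl_root {V : Type} (G : SimpleGraph V) (hG : G.Connected) (r : V) (b : Bool) (u : V) :
    ∃ p : (dbl G r).Walk (some (b, u)) none, p.length = G.dist u r + 1 := by
  obtain ⟨p, hp⟩ := hG.exists_walk_length_eq_dist u r
  have h : (dbl G r).Adj (emb G r b r) none := rfl
  refine ⟨(p.map (emb G r b)).concat h, ?_⟩
  refine (SimpleGraph.Walk.length_concat (p.map (emb G r b)) h).trans ?_
  rw [SimpleGraph.Walk.length_map, hp]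

theorem one_colour {V : Type} [DecidableEq V] (c : V → ℕ) (i : ℕ) (s : Finset V)
    (h : ∀ u v, c u = i → c v = i → u = v) : (s.filter (fun v => c v = i)).card ≤ 1 := by
  rw [Finset.card_le_one]
  intro a ha b hb
  exact h a b (Finset.mem_filter.1 ha).2 (Finset.mem_filter.1 hb).2

theorem pair_le {α : Type} (a b : α) : ({a, b} : Set α).ncard ≤ 2 := by
  have := Set.ncard_insert_le a {b}
  rwa [Set.ncard_singleton] at this

theorem good_step (E : ℕ) (h : Good E) : Good (E + 1) := by
  classical
  obtain ⟨V, _, G, r, hG, hd, hr, he, hc⟩ := h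
  have hroot : ∀ x, ∃ p : (dbl G r).Walk x none, p.length ≤ E + 1 := by
    rintro (_ | ⟨b, u⟩)
    · exact ⟨.nil, by simp⟩
    · obtain ⟨p, hp⟩ := dbl_root G hG r b u
      exact ⟨p, by have := he u; omega⟩
  refine ⟨Option (Bool × V), inferInstance, dbl G r, none, ?_, ?_, ?_, ?_, ?_⟩
  · have : Nonempty (Option (Bool × V)) := ⟨none⟩
    refine SimpleGraph.Connected.mk ?_
    intro x y
    obtain ⟨p, -⟩ := hroot x
    obtain ⟨q, -⟩ := hroot y
    exact ⟨p.append q.reverse⟩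
  · rintro (_ | ⟨b, u⟩)
    · have : (dbl G r).neighborSet none ⊆ {some (true, r), some (false, r)} := by
        rintro (_ | ⟨b, u⟩) hx
        · exact hx.elim
        · have : u = r := hx
          subst this
          cases b <;> simp
      exact (Set.ncard_le_ncard this).trans ((pair_le _ _).trans (by omega))
    · by_cases hu : u = r
      · have : (dbl G r).neighborSet (some (b, u)) ⊆
            insert none ((fun v => some (b, v)) '' G.neighborSet u) := by
          rintro (_ | ⟨b', u'⟩) hx
          · simp
          · obtain ⟨h1, h2⟩ := hx
            simp only at h1 h2
            subst h1
            right
            exact ⟨u', h2, rfl⟩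
        refine (Set.ncard_le_ncard this).trans ((Set.ncard_insert_le _ _).trans ?_)
        have := Set.ncard_image_le (f := fun v => some (b, v)) (Set.toFinite (G.neighborSet u))
        subst hu
        omega
      · have : (dbl G r).neighborSet (some (b, u)) ⊆
            ((fun v => some (b, v)) '' G.neighborSet u) := by
          rintro (_ | ⟨b', u'⟩) hx
          · exact (hu hx).elim
          · obtain ⟨h1, h2⟩ := hx
            simp only at h1 h2
            subst h1
            exact ⟨u', h2, rfl⟩
        refine (Set.ncard_le_ncard this).trans ?_
        exact (Set.ncard_image_le (f := fun v => some (b, v))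
          (Set.toFinite (G.neighborSet u))).trans (hd u)
  · have : (dbl G r).neighborSet none ⊆ {some (true, r), some (false, r)} := by
      rintro (_ | ⟨b, u⟩) hx
      · exact hx.elim
      · have : u = r := hx
        subst this
        cases b <;> simp
    exact (Set.ncard_le_ncard this).trans (pair_le _ _)
  · intro x
    obtain ⟨p, hp⟩ := hroot x
    exact (SimpleGraph.dist_le p).trans hp
  · intro c hc1 hc2
    have key : ∀ b : Bool, ∃ s : Finset V, 2 ≤ s.card ∧
        ∀ v ∈ s, 2 * (E + 1) ≤ c (some (b, v)) := by
      intro b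
      have hcc : ∀ u v, u ≠ v → c (some (b, u)) = c (some (b, v)) →
          c (some (b, u)) < G.dist u v := fun u v huv hcuv =>
        (hc2 _ _ (by simpa using huv) hcuv).trans_le (emb_dist G hG r b u v)
      obtain ⟨s, hs4, hs⟩ := hc (fun v => c (some (b, v))) (fun v => hc1 _) hcc
      have huniq : ∀ i, 2 * E ≤ i → ∀ u v, c (some (b, u)) = i → c (some (b, v)) = i → u = v := by
        intro i hi u v h1 h2
        by_contra hne
        have a1 := hcc u v hne (h1.trans h2.symm)
        have a2 := hG.dist_triangle (u := u) (v := r) (w := v)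
        have a3 := he u
        have a4 := he v
        rw [SimpleGraph.dist_comm] at a4
        omega
      have b1 := one_colour (fun v => c (some (b, v))) (2 * E) s (huniq _ le_rfl)
      have b2 := one_colour (fun v => c (some (b, v))) (2 * E + 1) s (huniq _ (by omega))
      refine ⟨s.filter (fun v => 2 * (E + 1) ≤ c (some (b, v))), ?_,
        fun v hv => (Finset.mem_filter.1 hv).2⟩
      have hsub : s ⊆ s.filter (fun v => 2 * (E + 1) ≤ c (some (b, v))) ∪
          (s.filter (fun v => c (some (b, v)) = 2 * E) ∪
            s.filter (fun v => c (some (b, v)) = 2 * E + 1)) := by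
        intro v hv
        have := hs v hv
        simp only [Finset.mem_union, Finset.mem_filter, hv, true_and]
        omega
      have d1 := Finset.card_le_card hsub
      have d2 := Finset.card_union_le (s.filter (fun v => 2 * (E + 1) ≤ c (some (b, v))))
        (s.filter (fun v => c (some (b, v)) = 2 * E) ∪
            s.filter (fun v => c (some (b, v)) = 2 * E + 1))
      have d3 := Finset.card_union_le (s.filter (fun v => c (some (b, v)) = 2 * E))
            (s.filter (fun v => c (some (b, v)) = 2 * E + 1))
      omega
    obtain ⟨s, hs2, hs⟩ := key true
    obtain ⟨t, ht2, ht⟩ := key false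
    refine ⟨s.image (fun v => some (true, v)) ∪ t.image (fun v => some (false, v)), ?_, ?_⟩
    · rw [Finset.card_union_of_disjoint, Finset.card_image_of_injective,
        Finset.card_image_of_injective]
      · omega
      · intro a b hab
        simpa using hab
      · intro a b hab
        simpa using hab
      · rw [Finset.disjoint_left]
        intro x hx hy
        obtain ⟨a, -, rfl⟩ := Finset.mem_image.1 hx
        obtain ⟨b, -, hb⟩ := Finset.mem_image.1 hy
        simp at hb
    · intro x hx
      rcases Finset.mem_union.1 hx with hx | hx
      · obtain ⟨a, ha, rfl⟩ := Finset.mem_image.1 hx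
        exact hs a ha
      · obtain ⟨a, ha, rfl⟩ := Finset.mem_image.1 hx
        exact ht a ha

/-! ### The base graph -/

/-- `check conf n l k`: all conflict-free subsets of `l` have at most `k` elements. -/
def check {α : Type} (conf : α → α → Bool) : ℕ → List α → ℕ → Bool
  | 0, _, _ => false
  | n + 1, l, k => bif Nat.ble l.length k then true else
    match l, k with
    | [], _ => true
    | _ :: _, 0 => false
    | v :: l, k + 1 =>
      check conf n (l.filter (fun w => !conf v w)) k && check conf n l (k + 1)

theorem check_sound {α : Type} [DecidableEq α] (conf : α → α → Bool) (n : ℕ) :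
    ∀ (l : List α) (k : ℕ), check conf n l k = true → ∀ s : Finset α, (∀ a ∈ s, a ∈ l) →
      (∀ a ∈ s, ∀ b ∈ s, a ≠ b → conf a b = false) → s.card ≤ k := by
  induction n with
  | zero => intro l k h; simp [check] at h
  | succ n ih =>
    intro l k h s hs hc
    by_cases hl : l.length ≤ k
    · refine le_trans ?_ hl
      refine le_trans (Finset.card_le_card (t := l.toFinset) ?_) (List.toFinset_card_le l)
      intro a ha
      simpa using hs a ha
    · have hb : Nat.ble l.length k = false := by
        rw [← Bool.not_eq_true, Nat.ble_eq]; exact hl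
      match l, k with
      | [], k => simp at hl
      | v :: l, 0 => simp [check] at h
      | v :: l, k + 1 =>
        simp only [check, hb, cond_false, Bool.and_eq_true] at h
        by_cases hv : v ∈ s
        · have := ih _ _ h.1 (s.erase v) (fun a ha => by
            have h1 := Finset.mem_erase.1 ha
            have h2 := hs a h1.2
            rw [List.mem_filter]
            refine ⟨by simpa [h1.1] using h2, ?_⟩
            rw [hc v hv a h1.2 h1.1.symm]; rfl)
            (fun a ha b hb => hc a (Finset.mem_of_mem_erase ha) b (Finset.mem_of_mem_erase hb))
          rw [Finset.card_erase_of_mem hv] at this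
          omega
        · refine ih _ _ h.2 s (fun a ha => ?_) hc
          have h2 := hs a ha
          have h3 : a ≠ v := fun e => hv (e ▸ ha)
          simpa [h3] using h2

def tab1 : List ℕ := [6, 25, 97, 386, 1538, 6148, 24580, 98312, 393224, 655376, 3145744, 12582944,
  50331680, 2129984, 67240000, 270464, 71303296, 17152, 33587456, 10486272, 83887104, 533504,
  16844800, 34080768, 5246976, 8654848, 1130496]

def tab2 : List ℕ := [127, 1951, 30823, 491931, 3802651, 62920805, 69394533, 71672202, 33997706,
  11159314, 87565842, 63510564, 64231460, 2942148, 68379460, 36020680, 89245832, 68043608,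
  42381704, 44707344, 91313168, 12101200, 97589408, 49027616, 122756128, 59545888, 89343168]

def tab3 : List ℕ := [32767, 4163583, 132315263, 105375647, 96102303, 64845927, 71303143,
  125299163, 110097371, 113143643, 100398683, 134028005, 131964261, 113240061, 92268541,
  116389326, 98041322, 113240030, 61864938, 50265970, 125533938, 129953494, 131718316, 66043700,
  133520564, 67025836, 91488220]

def rel (t : List ℕ) (v w : Fin 27) : Bool := Nat.testBit (t.getD v.val 0) w.val

theorem rel_symm : ∀ v w : Fin 27, rel tab1 v w = true → rel tab1 w v = true := by decide +kernel

theorem rel_irrefl : ∀ v : Fin 27, ¬ rel tab1 v v = true := by decide +kernel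

def B : SimpleGraph (Fin 27) where
  Adj v w := rel tab1 v w = true
  symm := ⟨rel_symm⟩
  loopless := ⟨rel_irrefl⟩

theorem rel2 : ∀ v w : Fin 27, rel tab2 v w = true →
    v = w ∨ rel tab1 v w = true ∨ ∃ u, rel tab1 v u = true ∧ rel tab1 u w = true := by
  decide +kernel

theorem rel3 : ∀ v w : Fin 27, rel tab3 v w = true →
    rel tab2 v w = true ∨ ∃ u, rel tab1 v u = true ∧ rel tab2 u w = true := by
  decide +kernel

theorem rel4 : ∀ v w : Fin 27,
    rel tab3 v w = true ∨ ∃ u, rel tab1 v u = true ∧ rel tab3 u w = true := by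
  decide +kernel

theorem walk1 (v w : Fin 27) (h : rel tab1 v w = true) : ∃ p : B.Walk v w, p.length ≤ 1 :=
  ⟨.cons (show B.Adj v w from h) .nil, by simp⟩

theorem walk2 (v w : Fin 27) (h : rel tab2 v w = true) : ∃ p : B.Walk v w, p.length ≤ 2 := by
  rcases rel2 v w h with rfl | h | ⟨u, h1, h2⟩
  · exact ⟨.nil, by simp⟩
  · obtain ⟨p, hp⟩ := walk1 v w h
    exact ⟨p, by omega⟩
  · obtain ⟨p, hp⟩ := walk1 u w h2
    exact ⟨.cons (show B.Adj v u from h1) p, by simp only [SimpleGraph.Walk.length_cons]; omega⟩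

theorem walk3 (v w : Fin 27) (h : rel tab3 v w = true) : ∃ p : B.Walk v w, p.length ≤ 3 := by
  rcases rel3 v w h with h | ⟨u, h1, h2⟩
  · obtain ⟨p, hp⟩ := walk2 v w h
    exact ⟨p, by omega⟩
  · obtain ⟨p, hp⟩ := walk2 u w h2
    exact ⟨.cons (show B.Adj v u from h1) p, by simp only [SimpleGraph.Walk.length_cons]; omega⟩

theorem walk4 (v w : Fin 27) : ∃ p : B.Walk v w, p.length ≤ 4 := by
  rcases rel4 v w with h | ⟨u, h1, h2⟩
  · obtain ⟨p, hp⟩ := walk3 v w h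
    exact ⟨p, by omega⟩
  · obtain ⟨p, hp⟩ := walk3 u w h2
    exact ⟨.cons (show B.Adj v u from h1) p, by simp only [SimpleGraph.Walk.length_cons]; omega⟩

theorem dist4 (v w : Fin 27) : B.dist v w ≤ 4 := by
  obtain ⟨p, hp⟩ := walk4 v w
  exact (SimpleGraph.dist_le p).trans hp

theorem chk1 : check (rel tab1) 28 (List.finRange 27) 11 = true := by decide +kernel
theorem chk2 : check (rel tab2) 28 (List.finRange 27) 5 = true := by decide +kernel
theorem chk3 : check (rel tab3) 28 (List.finRange 27) 3 = true := by decide +kernel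

theorem deg3 : ∀ v : Fin 27, (Finset.univ.filter (fun w => rel tab1 v w = true)).card ≤ 3 := by
  decide +kernel
theorem deg2 : (Finset.univ.filter (fun w => rel tab1 0 w = true)).card ≤ 2 := by
  decide +kernel

theorem nbr (v : Fin 27) : (B.neighborSet v).ncard =
    (Finset.univ.filter (fun w => rel tab1 v w = true)).card := by
  rw [← Set.ncard_coe_finset]
  congr 1
  ext w
  simp [B]

theorem class_le (c : Fin 27 → ℕ) (hc : ∀ u v, u ≠ v → c u = c v → c u < B.dist u v)
    (t : List ℕ) (i k : ℕ) (ht : ∀ v w, rel t v w = true → ∃ p : B.Walk v w, p.length ≤ i)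
    (hk : check (rel t) 28 (List.finRange 27) k = true) :
    (Finset.univ.filter (fun v => c v = i)).card ≤ k := by
  refine check_sound _ _ _ _ hk _ (fun a _ => List.mem_finRange a) ?_
  intro a ha b hb hab
  have h1 := (Finset.mem_filter.1 ha).2
  have h2 := (Finset.mem_filter.1 hb).2
  by_contra h
  rw [Bool.not_eq_false] at h
  obtain ⟨p, hp⟩ := ht a b h
  have h3 := SimpleGraph.dist_le p
  have h4 := hc a b hab (h1.trans h2.symm)
  omega

theorem good_base : Good 4 := by
  refine ⟨Fin 27, inferInstance, B, 0, ?_, ?_, ?_, fun v => dist4 v 0, ?_⟩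
  · refine SimpleGraph.Connected.mk ?_
    intro v w
    obtain ⟨p, -⟩ := walk4 v w
    exact ⟨p⟩
  · intro v
    rw [nbr]
    exact deg3 v
  · rw [nbr]
    exact deg2
  · intro c h1 hc
    have e1 := class_le c hc tab1 1 11 walk1 chk1
    have e2 := class_le c hc tab2 2 5 walk2 chk2
    have e3 := class_le c hc tab3 3 3 walk3 chk3
    have huniq : ∀ i, 4 ≤ i → (Finset.univ.filter (fun v => c v = i)).card ≤ 1 := by
      intro i hi
      refine one_colour c i _ ?_
      intro u v hu hv
      by_contra hne
      have a1 := hc u v hne (hu.trans hv.symm)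
      have a2 := dist4 u v
      omega
    have e4 := huniq 4 (by omega)
    have e5 := huniq 5 (by omega)
    have e6 := huniq 6 (by omega)
    have e7 := huniq 7 (by omega)
    refine ⟨Finset.univ.filter (fun v => 2 * 4 ≤ c v), ?_, fun v hv => (Finset.mem_filter.1 hv).2⟩
    have hlow : (Finset.univ.filter (fun v => ¬ 2 * 4 ≤ c v)).card ≤ 23 := by
      have hm : ∀ v ∈ Finset.univ.filter (fun v => ¬ 2 * 4 ≤ c v), c v ∈ Finset.Icc 1 7 := by
        intro v hv
        have := (Finset.mem_filter.1 hv).2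
        have := h1 v
        rw [Finset.mem_Icc]
        omega
      rw [Finset.card_eq_sum_card_fiberwise hm]
      have hle : ∀ i ∈ Finset.Icc 1 7,
          ((Finset.univ.filter (fun v => ¬ 2 * 4 ≤ c v)).filter (fun v => c v = i)).card ≤
          (Finset.univ.filter (fun v => c v = i)).card := by
        intro i _
        exact Finset.card_le_card (Finset.filter_subset_filter _ (Finset.subset_univ _))
      refine (Finset.sum_le_sum hle).trans ?_
      have hI : Finset.Icc 1 7 = ({1, 2, 3, 4, 5, 6, 7} : Finset ℕ) := by decide
      rw [hI]
      simp only [Finset.sum_insert, Finset.mem_insert, Finset.mem_singleton, Finset.sum_singleton,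
        Nat.reduceEqDiff, or_self, not_false_eq_true, OfNat.one_ne_ofNat]
      omega
    have := Finset.card_filter_add_card_filter_not (s := (Finset.univ : Finset (Fin 27)))
      (fun v => 2 * 4 ≤ c v)
    rw [Finset.card_univ, Fintype.card_fin] at this
    omega

theorem good_all (k : ℕ) : Good (4 + k) := by
  induction k with
  | zero => exact good_base
  | succ k ih => exact good_step _ ih

end PackSub

/-- The packing chromatic number is unbounded on connected subcubic graphs:
for every `n` there is a finite connected simple graph with all degrees at most
`3` whose packing chromatic number is at least `n`. -/
theorem stmt16 (n : ℕ) :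
    ∃ (V : Type) (_ : Fintype V) (G : SimpleGraph V),
      G.Connected ∧ (∀ v, (G.neighborSet v).ncard ≤ 3) ∧
      n ≤ packingChromaticNumber G := by
  obtain ⟨V, hV, G, r, hG, hd, -, -, hc⟩ := PackSub.good_all n
  refine ⟨V, hV, G, hG, hd, ?_⟩
  unfold packingChromaticNumber
  refine le_csInf ?_ ?_
  · let f := Fintype.equivFin V
    refine ⟨Fintype.card V, fun v => (f v).val + 1, fun v => ⟨Nat.succ_pos _, (f v).isLt⟩, ?_⟩
    intro i _ _ u hu v hv huv
    have h1 : (f u).val + 1 = i := hu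
    have h2 : (f v).val + 1 = i := hv
    exact (huv (f.injective (Fin.ext (by omega)))).elim
  · rintro k ⟨c, hc1, hc2⟩
    obtain ⟨s, hs4, hs⟩ := hc c (fun v => (hc1 v).1) (fun u v huv he =>
      hc2 (c u) (hc1 u).1 (hc1 u).2 u rfl v he.symm huv)
    obtain ⟨v, hv⟩ := Finset.card_pos.1 (by omega : 0 < s.card)
    have := hs v hv
    have := (hc1 v).2
    omega
end
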